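/- Let L1 = (S1, ι1, →1) and L2 = (S2, ι2, →2) be two LTSs. Then L1 ⊑sfr L2 (i.e., failures(L2) ⊆ failures(L1) and weaktraces(L2) ⊆ weaktraces(L1)) holds if and only if no SF-witness is reachable in the product norm(L1) ⋉ L2, where a product state (U, s) is an SF-witness iff U = ∅, or s is stable and refusals(s) ⊄ refusals(U). -/

import Mathlib

/-- A labelled transition system with states `S` and visible actions `Act`.
Transition labels are `Option Act`, where `none` plays the role of the
internal action τ and `some a` is the visible action `a ∈ Act`. -/
structure LTS (S : Type*) (Act : Type*) where
  init : S
  tr : S → Option Act → S → Prop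

namespace LTS

variable {S S₁ S₂ : Type*} {Act : Type*}

/-- The trace relation: `s ⟶ε t` iff `s = t`, and `s ⟶(σ a) t` iff
`s ⟶σ u` and `u —a→ t` for some `u`. -/
inductive Trace (L : LTS S Act) : S → List (Option Act) → S → Prop
  | nil (s : S) : Trace L s [] s
  | snoc {s u t : S} {σ : List (Option Act)} {a : Option Act} :
      Trace L s σ u → L.tr u a t → Trace L s (σ ++ [a]) t

/-- The weak transition relation `s ⇒ρ t` for `ρ ∈ Act*`. -/
inductive Weak (L : LTS S Act) : S → List Act → S → Prop
  | refl (s : S) : Weak L s [] s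
  | tau {s t : S} : L.tr s none t → Weak L s [] t
  | act {s t : S} {a : Act} : L.tr s (some a) t → Weak L s [a] t
  | comp {s u t : S} {ρ σ : List Act} :
      Weak L s ρ u → Weak L u σ t → Weak L s (ρ ++ σ) t

/-- A state is reachable iff some trace leads from the initial state to it. -/
def Reachable (L : LTS S Act) (s : S) : Prop := ∃ σ, L.Trace L.init σ s

/-- A state is stable iff it has no outgoing τ-transition. -/
def Stable (L : LTS S Act) (s : S) : Prop := ¬ ∃ t, L.tr s none t

/-- A state diverges iff there is an infinite sequence of τ-transitions from it. -/
def Diverges (L : LTS S Act) (s : S) : Prop :=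
  ∃ f : ℕ → S, f 0 = s ∧ ∀ n, L.tr (f n) none (f (n + 1))

/-- The weak traces of an LTS. -/
def weaktraces (L : LTS S Act) : Set (List Act) := {ρ | ∃ t, L.Weak L.init ρ t}

/-- The divergences of an LTS: all `ρ σ` such that `ι ⇒ρ t` for a diverging `t`. -/
def divergences (L : LTS S Act) : Set (List Act) :=
  {w | ∃ ρ σ : List Act, w = ρ ++ σ ∧ ∃ t, L.Weak L.init ρ t ∧ L.Diverges t}

/-- The refusals of a (stable) state: all sets `X` of visible actions none of
which is enabled in `s`. -/
def refusals (L : LTS S Act) (s : S) : Set (Set Act) :=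
  {X | ∀ a ∈ X, ¬ ∃ t, L.tr s (some a) t}

/-- The refusals of a set of states. -/
def refusalsSet (L : LTS S Act) (U : Set S) : Set (Set Act) :=
  {X | ∃ s ∈ U, L.Stable s ∧ X ∈ L.refusals s}

/-- The stable failures of an LTS. -/
def failures (L : LTS S Act) : Set (List Act × Set Act) :=
  {p | ∃ t, L.Weak L.init p.1 t ∧ L.Stable t ∧ p.2 ∈ L.refusals t}

/-- The failures with post-divergence details obscured. -/
def failuresBot (L : LTS S Act) : Set (List Act × Set Act) :=
  L.failures ∪ {p | p.1 ∈ L.divergences}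

/-- The normal form of an LTS. -/
def norm (L : LTS S Act) : LTS (Set S) Act where
  init := {s | L.Weak L.init [] s}
  tr U a V := ∃ b : Act, a = some b ∧ V = {t | ∃ s ∈ U, L.Weak s [b] t}

/-- The failures-divergences normal form of an LTS. -/
def normFdr (L : LTS S Act) : LTS (Set S) Act where
  init := {s | L.Weak L.init [] s}
  tr U a V := ∃ b : Act, a = some b ∧ (¬ ∃ s ∈ U, L.Diverges s) ∧
      V = {t | ∃ s ∈ U, L.Weak s [b] t}

/-- The product of two LTSs. -/
def prod (L₁ : LTS S₁ Act) (L₂ : LTS S₂ Act) : LTS (S₁ × S₂) Act where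
  init := (L₁.init, L₂.init)
  tr p a q :=
    (a = none ∧ q.1 = p.1 ∧ L₂.tr p.2 none q.2) ∨
    (∃ b : Act, a = some b ∧ L₁.tr p.1 (some b) q.1 ∧ L₂.tr p.2 (some b) q.2)

end LTS


/-- An SF-witness: `U = ∅`, or `s` is stable and some refusal of `s` is not a
refusal of the set of states `U`. -/
def SFwitness {S₁ S₂ Act : Type*} (L₁ : LTS S₁ Act) (L₂ : LTS S₂ Act)
    (p : Set S₁ × S₂) : Prop :=
  p.1 = ∅ ∨ (L₂.Stable p.2 ∧ ¬ L₂.refusals p.2 ⊆ L₁.refusalsSet p.1)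

/-!
In `L₁.prod L₂` only `L₂` contributes τ-steps, while `L₁.norm` is deterministic and accepts every
visible action in every state. After a visible trace `ρ` of `L₂`, the product can thus be exactly in
the pairs of the set of all states `L₁` may be in after `ρ` and some state `L₂` may be in after `ρ`.
Such a pair is a witness precisely when `L₂` violates refinement there: its first component is empty
iff `ρ` is not a weak trace of `L₁`, and its refusals are the failures of `L₁` along `ρ`.
-/

namespace LTS

section Traces

variable {S Act : Type*} {L : LTS S Act} {s t : S}

theorem trace_nil_iff : L.Trace s [] t ↔ t = s := by
  constructor
  · generalize hσ : ([] : List (Option Act)) = σ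
    rintro (_ | _)
    · rfl
    · simp at hσ
  · rintro rfl
    exact .nil t

theorem trace_concat_iff {σ : List (Option Act)} {a : Option Act} :
    L.Trace s (σ ++ [a]) t ↔ ∃ u, L.Trace s σ u ∧ L.tr u a t := by
  constructor
  · generalize hτ : σ ++ [a] = τ
    rintro (_ | ⟨hσ, ha⟩)
    · simp at hτ
    · obtain ⟨rfl, rfl⟩ := List.append_singleton_inj.mp hτ
      exact ⟨_, hσ, ha⟩
  · rintro ⟨u, hσ, ha⟩
    exact .snoc hσ ha

theorem trace_append_iff {σ τ : List (Option Act)} :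
    L.Trace s (σ ++ τ) t ↔ ∃ u, L.Trace s σ u ∧ L.Trace u τ t := by
  induction τ using List.reverseRecOn generalizing t with
  | nil => simp [trace_nil_iff]
  | append_singleton τ a ih =>
    simp only [← List.append_assoc, trace_concat_iff, ih]
    tauto

theorem Trace.weak {σ : List (Option Act)} (h : L.Trace s σ t) : L.Weak s σ.reduceOption t := by
  induction h with
  | nil => exact .refl _
  | @snoc u t σ a _ ha ih =>
    rw [List.reduceOption_append]
    cases a with
    | none => exact ih.comp (.tau ha)
    | some a => exact ih.comp (.act ha)

theorem Weak.exists_trace {ρ : List Act} (h : L.Weak s ρ t) :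
    ∃ σ : List (Option Act), σ.reduceOption = ρ ∧ L.Trace s σ t := by
  induction h with
  | refl s => exact ⟨[], rfl, .nil s⟩
  | tau h => exact ⟨[none], rfl, .snoc (.nil _) h⟩
  | @act _ _ a h => exact ⟨[some a], rfl, .snoc (.nil _) h⟩
  | comp _ _ ih₁ ih₂ =>
    obtain ⟨σ, rfl, hσ⟩ := ih₁
    obtain ⟨τ, rfl, hτ⟩ := ih₂
    exact ⟨σ ++ τ, List.reduceOption_append σ τ, trace_append_iff.mpr ⟨_, hσ, hτ⟩⟩

theorem weak_append_iff {ρ σ : List Act} :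
    L.Weak s (ρ ++ σ) t ↔ ∃ u, L.Weak s ρ u ∧ L.Weak u σ t := by
  constructor
  · intro h
    obtain ⟨τ, hτ, htrace⟩ := h.exists_trace
    obtain ⟨τ₁, τ₂, rfl, rfl, rfl⟩ := List.reduceOption_eq_append_iff _ _ _ |>.mp hτ
    obtain ⟨u, h₁, h₂⟩ := trace_append_iff.mp htrace
    exact ⟨u, h₁.weak, h₂.weak⟩
  · rintro ⟨u, hρ, hσ⟩
    exact hρ.comp hσ

end Traces

section Normalization

variable {S Act : Type*} (L : LTS S Act)

/-- The set of states in which `L` can be after performing the visible actions `ρ` from its initial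
state, with τ-steps interleaved freely. -/
def after (ρ : List Act) : Set S := {t | L.Weak L.init ρ t}

theorem after_append (ρ σ : List Act) :
    L.after (ρ ++ σ) = {t | ∃ s ∈ L.after ρ, L.Weak s σ t} :=
  Set.ext fun _ => weak_append_iff

theorem norm_tr_some_iff {U V : Set S} {a : Act} :
    L.norm.tr U (some a) V ↔ V = {t | ∃ s ∈ U, L.Weak s [a] t} := by
  simp [norm]

theorem norm_trace_iff {ρ : List Act} {U : Set S} :
    L.norm.Trace L.norm.init (ρ.map some) U ↔ U = L.after ρ := by
  induction ρ using List.reverseRecOn generalizing U with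
  | nil => exact trace_nil_iff
  | append_singleton ρ a ih =>
    simp only [List.map_append, List.map_singleton, trace_concat_iff, ih, exists_eq_left,
      norm_tr_some_iff, after_append]

end Normalization

section Product

variable {S₁ S₂ Act : Type*} {L₁ : LTS S₁ Act} {L₂ : LTS S₂ Act} {p q : S₁ × S₂}

theorem prod_tr_none_iff :
    (L₁.prod L₂).tr p none q ↔ q.1 = p.1 ∧ L₂.tr p.2 none q.2 := by
  simp [prod]

theorem prod_tr_some_iff {a : Act} :
    (L₁.prod L₂).tr p (some a) q ↔ L₁.tr p.1 (some a) q.1 ∧ L₂.tr p.2 (some a) q.2 := by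
  simp [prod]

theorem prod_trace_iff {σ : List (Option Act)} :
    (L₁.prod L₂).Trace p σ q ↔
      L₁.Trace p.1 (σ.reduceOption.map some) q.1 ∧ L₂.Trace p.2 σ q.2 := by
  induction σ using List.reverseRecOn generalizing q with
  | nil => simp [trace_nil_iff, Prod.ext_iff]
  | append_singleton σ a ih =>
    rw [List.reduceOption_append, List.map_append, trace_concat_iff, trace_concat_iff]
    cases a with
    | none =>
      simp only [ih, prod_tr_none_iff, List.reduceOption_singleton, Option.toList_none,
        List.map_nil, List.append_nil]
      constructor
      · rintro ⟨u, ⟨h₁, h₂⟩, hq, htr⟩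
        exact ⟨hq ▸ h₁, u.2, h₂, htr⟩
      · rintro ⟨h₁, u₂, h₂, htr⟩
        exact ⟨(q.1, u₂), ⟨h₁, h₂⟩, rfl, htr⟩
    | some a =>
      simp only [ih, prod_tr_some_iff, List.reduceOption_singleton, Option.toList_some,
        List.map_singleton, trace_concat_iff]
      constructor
      · rintro ⟨u, ⟨h₁, h₂⟩, htr₁, htr₂⟩
        exact ⟨⟨u.1, h₁, htr₁⟩, u.2, h₂, htr₂⟩
      · rintro ⟨⟨u₁, h₁, htr₁⟩, u₂, h₂, htr₂⟩
        exact ⟨(u₁, u₂), ⟨h₁, h₂⟩, htr₁, htr₂⟩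

theorem prod_reachable_iff :
    (L₁.prod L₂).Reachable p ↔
      ∃ ρ : List Act, L₁.Trace L₁.init (ρ.map some) p.1 ∧ p.2 ∈ L₂.after ρ := by
  constructor
  · rintro ⟨σ, hσ⟩
    obtain ⟨h₁, h₂⟩ := prod_trace_iff.mp hσ
    exact ⟨σ.reduceOption, h₁, h₂.weak⟩
  · rintro ⟨ρ, h₁, h₂⟩
    obtain ⟨σ, rfl, hσ⟩ := Weak.exists_trace h₂
    exact ⟨σ, prod_trace_iff.mpr ⟨h₁, hσ⟩⟩

theorem norm_prod_reachable_iff {U : Set S₁} {s : S₂} :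
    (L₁.norm.prod L₂).Reachable (U, s) ↔ ∃ ρ, U = L₁.after ρ ∧ s ∈ L₂.after ρ := by
  simp only [prod_reachable_iff, norm_trace_iff]

end Product

section Refinement

variable {S₁ S₂ Act : Type*} {L₁ : LTS S₁ Act} {L₂ : LTS S₂ Act}

theorem weaktraces_subset_iff :
    L₂.weaktraces ⊆ L₁.weaktraces ↔ ∀ ρ, ∀ s ∈ L₂.after ρ, (L₁.after ρ).Nonempty :=
  ⟨fun h _ s hs => h ⟨s, hs⟩, fun h ρ ⟨s, hs⟩ => h ρ s hs⟩

theorem failures_subset_iff :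
    L₂.failures ⊆ L₁.failures ↔
      ∀ ρ, ∀ s ∈ L₂.after ρ, L₂.Stable s → L₂.refusals s ⊆ L₁.refusalsSet (L₁.after ρ) :=
  ⟨fun h ρ s hs hstable X hX => @h (ρ, X) ⟨s, hs, hstable, hX⟩,
    fun h ⟨ρ, _⟩ ⟨s, hs, hstable, hX⟩ => h ρ s hs hstable hX⟩

end Refinement

end LTS

theorem not_sfwitness_iff {S₁ S₂ Act : Type*} {L₁ : LTS S₁ Act} {L₂ : LTS S₂ Act}
    {U : Set S₁} {s : S₂} :
    ¬ SFwitness L₁ L₂ (U, s) ↔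
      U.Nonempty ∧ (L₂.Stable s → L₂.refusals s ⊆ L₁.refusalsSet U) := by
  simp only [SFwitness, not_or, not_and, not_not, Set.nonempty_iff_ne_empty, ne_eq]

/-- stable failures refinement holds iff no SF-witness is
reachable in the product of the normal form of the specification and the
implementation. -/
theorem stable_failures_refinement_iff {S₁ S₂ Act : Type*}
    (L₁ : LTS S₁ Act) (L₂ : LTS S₂ Act) :
    (L₂.failures ⊆ L₁.failures ∧ L₂.weaktraces ⊆ L₁.weaktraces) ↔
      ¬ ∃ p : Set S₁ × S₂, ((L₁.norm).prod L₂).Reachable p ∧ SFwitness L₁ L₂ p := by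
  rw [LTS.failures_subset_iff, LTS.weaktraces_subset_iff]
  constructor
  · rintro ⟨hfailures, htraces⟩ ⟨⟨U, s⟩, hreach, hwitness⟩
    obtain ⟨ρ, rfl, hs⟩ := LTS.norm_prod_reachable_iff.mp hreach
    exact not_sfwitness_iff.mpr ⟨htraces ρ s hs, hfailures ρ s hs⟩ hwitness
  · intro hno
    have hpair : ∀ ρ, ∀ s ∈ L₂.after ρ, ¬ SFwitness L₁ L₂ (L₁.after ρ, s) :=
      fun ρ s hs hwitness =>
        hno ⟨_, LTS.norm_prod_reachable_iff.mpr ⟨ρ, rfl, hs⟩, hwitness⟩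
    exact ⟨fun ρ s hs => (not_sfwitness_iff.mp (hpair ρ s hs)).2,
      fun ρ s hs => (not_sfwitness_iff.mp (hpair ρ s hs)).1⟩
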